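/- arXiv:2201.11436 — 3 statements merged into one kernel-verified Lean document; each statement's English description precedes it below -/
import Mathlib

section
/- Assume A = ℤ. Let ĝ ∈ Ĝ, g = p(ĝ), and let x ∈ X be a periodic point of g of period q ≥ 1, with n ∈ ℤ the integer satisfying ĝ^q(x̂) = T_n(x̂) for x̂ ∈ π⁻¹(x). Assume the function y ↦ ρ_y(ĝ) is Borel measurable. Then the measure μ = (1/q) Σ_{i=0}^{q−1} δ_{g^i(x)} (an average of Dirac measures) is a g-invariant Borel probability measure on X and the mean translation number satisfies rot_μ(ĝ) = n/q. -/
/-!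
The sum of `ρ` along the orbit `x, g x, …, g^(q-1) x` telescopes. Since `ρ` may be computed at any
point of a fiber (`rho_eq`), one lift `xh` of `x` can be followed along its `gh`-orbit, so that the
sum is `θ (gh^q xh) - θ xh = θ (T r xh) - θ xh = r = n`; integrating against the uniform measure
on the orbit divides it by `q`. Invariance holds because pushing forward by `g` shifts the list of
Dirac masses by one step, and `g^q x = x` closes the cycle.
-/

open Function Filter Topology MeasureTheory

/-- The setting: a principal `A`-bundle-like structure, where `A` is an additive
subgroup of `ℝ` (intended to be `ℤ` or `ℝ` with the discrete topology).
`π : Xh → X` is a continuous surjection, `A` acts on `Xh` by homeomorphisms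
`T r` commuting with `π`, and the action is free and transitive on each fiber. -/
structure BundleSetting (A : AddSubgroup ℝ) (Xh X : Type*)
    [TopologicalSpace Xh] [TopologicalSpace X] where
  π : Xh → X
  hπ_cont : Continuous π
  hπ_surj : Function.Surjective π
  T : A → Xh ≃ₜ Xh
  hT_add : ∀ (r s : A) (xh : Xh), T (r + s) xh = T r (T s xh)
  hT_π : ∀ (r : A) (xh : Xh), π (T r xh) = π xh
  hT_transfree : ∀ xh yh : Xh, π xh = π yh → ∃! r : A, T r xh = yh

/-- `A` is either `ℤ` (the subgroup of `ℝ` generated by `1`) or all of `ℝ`. -/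
def IsIntOrReal (A : AddSubgroup ℝ) : Prop :=
  A = AddSubgroup.zmultiples (1 : ℝ) ∨ A = ⊤

variable {A : AddSubgroup ℝ} {Xh X : Type*} [TopologicalSpace Xh] [TopologicalSpace X]

/-- A function `θ : Xh → ℝ` is equivariant if `θ (T r xh) = θ xh + r`. -/
def BundleSetting.Equivariant (B : BundleSetting A Xh X) (θ : Xh → ℝ) : Prop :=
  ∀ (r : A) (xh : Xh), θ (B.T r xh) = θ xh + (r : ℝ)

/-- `gh` is a bundle automorphism covering the homeomorphism `g` of the base. -/
def BundleSetting.IsAuto (B : BundleSetting A Xh X) (gh : Xh ≃ₜ Xh) (g : X ≃ₜ X) : Prop :=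
  (∀ (r : A) (xh : Xh), gh (B.T r xh) = B.T r (gh xh)) ∧
  (∀ xh : Xh, B.π (gh xh) = g (B.π xh))

/-- `ρ_x(f) = θ (f xh) - θ xh` for a chosen lift `xh` of `x` (independent of the
choice of lift when `θ` is equivariant and `f` commutes with the `A`-action). -/
noncomputable def BundleSetting.ρ (B : BundleSetting A Xh X) (θ : Xh → ℝ)
    (f : Xh → Xh) (x : X) : ℝ :=
  θ (f (Function.surjInv B.hπ_surj x)) - θ (Function.surjInv B.hπ_surj x)

/-- The measure `(1/q) ∑_{i=0}^{q-1} δ_{g^i x}`. -/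
noncomputable def periodicOrbitMeasure [MeasurableSpace X] (g : X → X) (x : X)
    (q : ℕ) : Measure X :=
  (q : ENNReal)⁻¹ • ∑ i ∈ Finset.range q, Measure.dirac (g^[i] x)

/-- `ρ` can be computed from any lift, not only the chosen one. -/
theorem rho_eq (B : BundleSetting A Xh X) {θ : Xh → ℝ} (hθ : B.Equivariant θ)
    {gh : Xh ≃ₜ Xh} {g : X ≃ₜ X} (hgh : B.IsAuto gh g) (xh : Xh) :
    B.ρ θ gh (B.π xh) = θ (gh xh) - θ xh := by
  obtain ⟨s, hs, -⟩ := B.hT_transfree (surjInv B.hπ_surj (B.π xh)) xh (surjInv_eq B.hπ_surj _)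
  simp only [BundleSetting.ρ]
  conv_rhs => rw [← hs, hgh.1, hθ, hθ]
  ring

theorem proj_iterate (B : BundleSetting A Xh X) {gh : Xh ≃ₜ Xh} {g : X ≃ₜ X}
    (hgh : B.IsAuto gh g) (i : ℕ) (xh : Xh) : B.π (gh^[i] xh) = g^[i] (B.π xh) :=
  Semiconj.iterate_right (f := B.π) hgh.2 i xh

/-- The cocycle `ρ` telescopes along orbits. -/
theorem sum_rho_iterate (B : BundleSetting A Xh X) {θ : Xh → ℝ} (hθ : B.Equivariant θ)
    {gh : Xh ≃ₜ Xh} {g : X ≃ₜ X} (hgh : B.IsAuto gh g) (q : ℕ) (xh : Xh) :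
    ∑ i ∈ Finset.range q, B.ρ θ gh (g^[i] (B.π xh)) = θ (gh^[q] xh) - θ xh := by
  have h (i : ℕ) : B.ρ θ gh (g^[i] (B.π xh)) = θ (gh^[i + 1] xh) - θ (gh^[i] xh) := by
    rw [← proj_iterate B hgh, rho_eq B hθ hgh, iterate_succ_apply']
  simp_rw [h]
  exact Finset.sum_range_sub (fun i => θ (gh^[i] xh)) q

theorem isProbabilityMeasure_periodicOrbitMeasure [MeasurableSpace X] (g : X → X) (x : X)
    {q : ℕ} (hq : 1 ≤ q) : IsProbabilityMeasure (periodicOrbitMeasure g x q) := by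
  constructor
  have h0 : (q : ENNReal) ≠ 0 := by exact_mod_cast (by omega : q ≠ 0)
  simp [periodicOrbitMeasure, ENNReal.inv_mul_cancel h0 (ENNReal.natCast_ne_top q)]

theorem measurePreserving_periodicOrbitMeasure [MeasurableSpace X] {g : X → X}
    (hg : Measurable g) {x : X} {q : ℕ} (hx : g^[q] x = x) :
    MeasurePreserving g (periodicOrbitMeasure g x q) (periodicOrbitMeasure g x q) := by
  refine ⟨hg, ?_⟩
  ext s hs
  rw [Measure.map_apply hg hs]
  simp only [periodicOrbitMeasure, Measure.smul_apply, Measure.finsetSum_apply]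
  congr 1
  have h (i : ℕ) : Measure.dirac (g^[i] x) (g ⁻¹' s) = Measure.dirac (g^[i + 1] x) s := by
    rw [iterate_succ_apply', ← Measure.map_dirac' hg, Measure.map_apply hg hs]
  simp_rw [h]
  -- Both sides complete to the sum over `0, …, q` of the Dirac masses, by adding the `0`-th and
  -- the `q`-th term respectively; these coincide, and the finite value `≤ 1` can be cancelled.
  have e := (Finset.sum_range_succ' (fun i => Measure.dirac (g^[i] x) s) q).symm.trans
    (Finset.sum_range_succ (fun i => Measure.dirac (g^[i] x) s) q)
  simp only [hx, iterate_zero_apply] at e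
  exact (ENNReal.add_left_inj (measure_ne_top _ _)).1 e

theorem integral_periodicOrbitMeasure [MeasurableSpace X] (g : X → X) (x : X) (q : ℕ)
    {f : X → ℝ} (hf : Measurable f) :
    ∫ y, f y ∂(periodicOrbitMeasure g x q) = (∑ i ∈ Finset.range q, f (g^[i] x)) / q := by
  have hs := hf.stronglyMeasurable
  rw [periodicOrbitMeasure, integral_smul_measure,
    integral_finsetSum_measure fun i _ => integrable_dirac' hs (by simp)]
  simp only [integral_dirac' _ _ hs, ENNReal.toReal_inv, ENNReal.toReal_natCast, smul_eq_mul]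
  ring

/-- for `A = ℤ` and a periodic point `x` of period `q` with
`gh^q xh = T n xh` on the fiber over `x`, the averaged Dirac measure along the orbit
is a `g`-invariant Borel probability measure whose mean translation number is `n/q`. -/
theorem stmt6 (hA : A = AddSubgroup.zmultiples (1 : ℝ)) (B : BundleSetting A Xh X)
    (θ : Xh → ℝ) (hθ : B.Equivariant θ) (gh : Xh ≃ₜ Xh) (g : X ≃ₜ X)
    (hgh : B.IsAuto gh g) (x : X) (q : ℕ) (hq : 1 ≤ q) (hx : (⇑g)^[q] x = x)
    (n : ℤ) (r : A) (hr : (r : ℝ) = (n : ℝ))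
    (hlift : ∀ xh : Xh, B.π xh = x → (⇑gh)^[q] xh = B.T r xh)
    [MeasurableSpace X] [BorelSpace X]
    (hmeas : Measurable (B.ρ θ ⇑gh)) :
    IsProbabilityMeasure (periodicOrbitMeasure (⇑g) x q) ∧
    MeasurePreserving (⇑g) (periodicOrbitMeasure (⇑g) x q) (periodicOrbitMeasure (⇑g) x q) ∧
    ∫ y, B.ρ θ ⇑gh y ∂(periodicOrbitMeasure (⇑g) x q) = (n : ℝ) / q := by
  refine ⟨isProbabilityMeasure_periodicOrbitMeasure _ _ hq,
    measurePreserving_periodicOrbitMeasure g.continuous.measurable hx, ?_⟩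
  obtain ⟨xh, rfl⟩ := B.hπ_surj x
  rw [integral_periodicOrbitMeasure _ _ _ hmeas, sum_rho_iterate B hθ hgh, hlift xh rfl, hθ, hr,
    add_sub_cancel_left]
end

section
/- Assume that π : X̂ → X is a covering map and that X is compact. Let θ₁ and θ₂ be continuous equivariant functions on X̂, let ĝ ∈ Ĝ, x ∈ X, and let μ be a p(ĝ)-invariant Borel probability measure on X. Then the local translation number of ĝ at x with respect to θ₁ exists if and only if it exists with respect to θ₂, in which case they are equal; and the mean translation numbers of ĝ with respect to μ computed from θ₁ and from θ₂ both exist and are equal. -/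
/-!
Both `θ₁ - θ₂` and `θ ∘ gh - θ` are continuous and constant on the fibers of `π`. A surjective
covering map is a quotient map, so such functions descend to continuous functions on the compact
space `X`, which are bounded (`BundleSetting.continuous_comp_surjInv`).

If `h : X → ℝ` is the function induced by `θ₁ - θ₂`, the two cocycles differ by a coboundary,
`ρ θ₁ f x - ρ θ₂ f x = h (π (f xh)) - h x`, where `xh` is the chosen lift of `x`. For
`f = gh^[n]` the right side is bounded uniformly in `n`, hence vanishes in the limit after
division by `n`. For `f = gh` it equals `h (g x) - h x`, whose integral is zero because `μ` is
`g`-invariant.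
-/

open Function Filter Topology MeasureTheory

variable {A : AddSubgroup ℝ} {Xh X : Type*} [TopologicalSpace Xh] [TopologicalSpace X]

/-- A function on the total space invariant under the action takes equal values on each fiber. -/
lemma BundleSetting.apply_surjInv (B : BundleSetting A Xh X) {F : Xh → ℝ}
    (hF : ∀ (r : A) (xh : Xh), F (B.T r xh) = F xh) (xh : Xh) :
    F (Function.surjInv B.hπ_surj (B.π xh)) = F xh := by
  obtain ⟨r, hr, -⟩ := B.hT_transfree xh (Function.surjInv B.hπ_surj (B.π xh))
    (Function.surjInv_eq B.hπ_surj _).symm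
  rw [← hr, hF]

/-- A continuous invariant function on the total space descends to a continuous function on the
base, since a surjective covering map is a quotient map. -/
lemma BundleSetting.continuous_comp_surjInv (B : BundleSetting A Xh X)
    (hcov : IsCoveringMap B.π) {F : Xh → ℝ} (hc : Continuous F)
    (hF : ∀ (r : A) (xh : Xh), F (B.T r xh) = F xh) :
    Continuous (F ∘ Function.surjInv B.hπ_surj) := by
  rw [(hcov.isQuotientMap B.hπ_surj).continuous_iff]
  exact hc.congr fun xh => (B.apply_surjInv hF xh).symm

lemma BundleSetting.continuous_ρ (B : BundleSetting A Xh X) (hcov : IsCoveringMap B.π)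
    {θ : Xh → ℝ} (hc : Continuous θ) (he : B.Equivariant θ) {f : Xh → Xh} (hf : Continuous f)
    (hfT : ∀ (r : A) (xh : Xh), f (B.T r xh) = B.T r (f xh)) :
    Continuous (B.ρ θ f) := by
  refine B.continuous_comp_surjInv hcov (F := fun xh => θ (f xh) - θ xh)
    ((hc.comp hf).sub hc) fun r xh => ?_
  rw [hfT, he, he]
  ring

/-- If the sequences `u` and `v` are at bounded distance, every limit of `u n / n` is also the
limit of `v n / n`. -/
lemma tendsto_div_nat_of_bounded_sub {u v : ℕ → ℝ} {C L : ℝ} (h : ∀ n, |u n - v n| ≤ C)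
    (hu : Tendsto (fun n : ℕ => u n / n) atTop (𝓝 L)) :
    Tendsto (fun n : ℕ => v n / n) atTop (𝓝 L) := by
  have h0 : Tendsto (fun n : ℕ => (u n - v n) / n) atTop (𝓝 0) := by
    refine squeeze_zero_norm (fun n => ?_) (tendsto_const_div_atTop_nhds_zero_nat C)
    rw [Real.norm_eq_abs, abs_div, Nat.abs_cast]
    gcongr
    exact h n
  simpa [sub_div] using hu.sub h0

/-- for a covering `π` over a compact base and two continuous
equivariant functions `θ₁, θ₂`, the local translation numbers computed from `θ₁`
and `θ₂` exist simultaneously and agree, and the mean translation numbers with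
respect to any invariant Borel probability measure exist and agree. -/
theorem stmt11 (hA : IsIntOrReal A) (B : BundleSetting A Xh X)
    (hcov : IsCoveringMap B.π) [CompactSpace X]
    (θ₁ θ₂ : Xh → ℝ) (hc₁ : Continuous θ₁) (he₁ : B.Equivariant θ₁)
    (hc₂ : Continuous θ₂) (he₂ : B.Equivariant θ₂)
    (gh : Xh ≃ₜ Xh) (g : X ≃ₜ X) (hgh : B.IsAuto gh g) (x : X)
    [MeasurableSpace X] [BorelSpace X] (μ : Measure X) [IsProbabilityMeasure μ]
    (hμ : MeasurePreserving (⇑g) μ μ) :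
    (∀ L : ℝ, Tendsto (fun n : ℕ => B.ρ θ₁ (⇑gh)^[n] x / n) atTop (𝓝 L) ↔
      Tendsto (fun n : ℕ => B.ρ θ₂ (⇑gh)^[n] x / n) atTop (𝓝 L)) ∧
    Integrable (B.ρ θ₁ ⇑gh) μ ∧ Integrable (B.ρ θ₂ ⇑gh) μ ∧
    ∫ y, B.ρ θ₁ ⇑gh y ∂μ = ∫ y, B.ρ θ₂ ⇑gh y ∂μ := by
  set F : Xh → ℝ := fun xh => θ₁ xh - θ₂ xh with hFdef
  have hF : ∀ (r : A) (xh : Xh), F (B.T r xh) = F xh := fun r xh => by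
    simp only [hFdef, he₁ r xh, he₂ r xh]
    ring
  set h : X → ℝ := F ∘ Function.surjInv B.hπ_surj with hh
  have hcont : Continuous h := B.continuous_comp_surjInv hcov (hc₁.sub hc₂) hF
  obtain ⟨C, hC⟩ := isCompact_univ.exists_bound_of_continuousOn hcont.continuousOn
  have hdiff : ∀ (f : Xh → Xh) (y : X),
      B.ρ θ₁ f y - B.ρ θ₂ f y = h (B.π (f (Function.surjInv B.hπ_surj y))) - h y := by
    intro f y
    simp only [hh, Function.comp_apply, B.apply_surjInv hF]
    simp only [hFdef, BundleSetting.ρ]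
    ring
  have hbdd : ∀ n : ℕ, |B.ρ θ₁ (⇑gh)^[n] x - B.ρ θ₂ (⇑gh)^[n] x| ≤ C + C := by
    intro n
    rw [hdiff]
    exact (norm_sub_le _ _).trans (add_le_add (hC _ trivial) (hC _ trivial))
  -- Continuous functions on a compact space are integrable for a finite measure.
  have hint : ∀ {φ : X → ℝ}, Continuous φ → Integrable φ μ := fun hφ =>
    hφ.integrable_of_hasCompactSupport (HasCompactSupport.of_compactSpace _)
  have hi₁ : Integrable (B.ρ θ₁ ⇑gh) μ :=
    hint (B.continuous_ρ hcov hc₁ he₁ gh.continuous hgh.1)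
  have hi₂ : Integrable (B.ρ θ₂ ⇑gh) μ :=
    hint (B.continuous_ρ hcov hc₂ he₂ gh.continuous hgh.1)
  refine ⟨fun L => ⟨tendsto_div_nat_of_bounded_sub hbdd,
    tendsto_div_nat_of_bounded_sub (C := C + C) fun n => ?_⟩, hi₁, hi₂, ?_⟩
  · rw [abs_sub_comm]
    exact hbdd n
  · rw [← sub_eq_zero, ← integral_sub hi₁ hi₂]
    have hcob : ∀ y, B.ρ θ₁ ⇑gh y - B.ρ θ₂ ⇑gh y = h (g y) - h y := fun y => by
      rw [hdiff, hgh.2, Function.surjInv_eq B.hπ_surj]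
    simp_rw [hcob]
    have hig : Integrable (fun y => h (g y)) μ := hint (hcont.comp g.continuous)
    rw [integral_sub hig (hint hcont),
      hμ.integral_comp g.measurableEmbedding, sub_self]
end

section
/- Assume that π : X̂ → X is a covering map, that X is compact, and that θ is a continuous equivariant function on X̂. Let ĝ ∈ Ĝ and x ∈ X, and suppose the local translation number rot_x(ĝ) = lim_{n→∞} ρ_x(ĝⁿ)/n exists and is non-zero. Then ĝ is undistorted in Ĝ: for every finitely generated subgroup Γ of Ĝ containing ĝ and every finite symmetric generating set S of Γ, lim_{n→∞} |ĝⁿ|_S / n > 0. -/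
/-!
For a bundle automorphism `s` the displacement `x̂ ↦ θ (s x̂) - θ x̂` is continuous and, by
equivariance of `θ`, constant on the fibers of `π`. A surjective covering map is a quotient map, so
the displacement descends to a continuous function on the compact base and is therefore bounded
(`exists_displacement_bound`). With a common bound `C` for the finitely many generators,
telescoping gives `|θ (γ x̂) - θ x̂| ≤ C * |γ|_S` for every `γ ∈ Γ` (`abs_displacement_prod_le`).
Applied to `γ = ĝⁿ` and divided by `n`, this yields `|L| ≤ C * lim |ĝⁿ|_S / n`, where the limit
exists by Fekete's lemma because the word norm is subadditive.
-/

open Function Filter Topology MeasureTheory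

variable {A : AddSubgroup ℝ} {Xh X : Type*} [TopologicalSpace Xh] [TopologicalSpace X]

/-- The group structure on self-homeomorphisms, with `f * g = f ∘ g`. -/
instance : Group (Xh ≃ₜ Xh) where
  mul f g := g.trans f
  one := Homeomorph.refl Xh
  inv := Homeomorph.symm
  mul_assoc a b c := by ext x; rfl
  one_mul a := by ext x; rfl
  mul_one a := by ext x; rfl
  inv_mul_cancel a := by ext x; exact a.symm_apply_apply x

/-- The word norm of `γ` with respect to a generating set `S`: the least length of
a word in elements of `S` whose product is `γ`. -/
noncomputable def wordNorm {G : Type*} [Group G] (S : Finset G) (γ : G) : ℕ :=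
  sInf {l : ℕ | ∃ w : List G, w.length = l ∧ (∀ s ∈ w, s ∈ S) ∧ w.prod = γ}

section WordNorm

variable {G : Type*} [Group G]

/-- The infimum defining the word norm is attained on the group generated by `S`, so the junk value
`sInf ∅ = 0` does not occur there. -/
lemma exists_word_length_eq_wordNorm {S : Finset G} (hS : ∀ s ∈ S, s⁻¹ ∈ S) {γ : G}
    (hγ : γ ∈ Subgroup.closure (S : Set G)) :
    ∃ w : List G, w.length = wordNorm S γ ∧ (∀ s ∈ w, s ∈ S) ∧ w.prod = γ := by
  rw [← Subgroup.mem_toSubmonoid, Subgroup.closure_toSubmonoid] at hγ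
  obtain ⟨w, hw, hprod⟩ := Submonoid.exists_list_of_mem_closure hγ
  refine Nat.sInf_mem (s := {l : ℕ | ∃ w : List G, w.length = l ∧ (∀ s ∈ w, s ∈ S) ∧ w.prod = γ})
    ⟨w.length, w, rfl, fun s hs => ?_, hprod⟩
  rcases hw s hs with h | h
  · exact h
  · simpa using hS _ h

lemma wordNorm_mul_le {S : Finset G} (hS : ∀ s ∈ S, s⁻¹ ∈ S) {a b : G}
    (ha : a ∈ Subgroup.closure (S : Set G)) (hb : b ∈ Subgroup.closure (S : Set G)) :
    wordNorm S (a * b) ≤ wordNorm S a + wordNorm S b := by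
  obtain ⟨u, hu, huS, rfl⟩ := exists_word_length_eq_wordNorm hS ha
  obtain ⟨v, hv, hvS, rfl⟩ := exists_word_length_eq_wordNorm hS hb
  rw [← hu, ← hv]
  refine Nat.sInf_le ⟨u ++ v, List.length_append, fun s hs => ?_, List.prod_append⟩
  rcases List.mem_append.1 hs with h | h
  · exact huS s h
  · exact hvS s h

end WordNorm

lemma homeomorph_coe_pow (f : Xh ≃ₜ Xh) (n : ℕ) : ⇑(f ^ n) = (⇑f)^[n] := by
  induction n with
  | zero => rw [pow_zero]; rfl
  | succ n ih => rw [pow_succ, Function.iterate_succ, ← ih]; rfl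

/-- An automorphism over a compact base moves `θ` by a bounded amount. -/
lemma exists_displacement_bound [CompactSpace X] (B : BundleSetting A Xh X)
    (hcov : IsCoveringMap B.π) {θ : Xh → ℝ} (hc : Continuous θ) (hθ : B.Equivariant θ)
    {f : Xh ≃ₜ Xh} {f0 : X ≃ₜ X} (hf : B.IsAuto f f0) :
    ∃ C : ℝ, ∀ y : Xh, |θ (f y) - θ y| ≤ C := by
  have hfib : ∀ y z : Xh, B.π y = B.π z → θ (f y) - θ y = θ (f z) - θ z := by
    intro y z h
    obtain ⟨r, rfl, -⟩ := B.hT_transfree y z h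
    rw [hf.1, hθ, hθ]
    ring
  have hdesc : B.ρ θ f ∘ B.π = fun y => θ (f y) - θ y := by
    funext y
    exact hfib _ _ (Function.surjInv_eq B.hπ_surj _)
  have hcont : Continuous (B.ρ θ f) := by
    rw [(hcov.isQuotientMap B.hπ_surj).continuous_iff, hdesc]
    exact (hc.comp f.continuous).sub hc
  obtain ⟨C, hC⟩ := isCompact_univ.exists_bound_of_continuousOn hcont.continuousOn
  refine ⟨C, fun y => ?_⟩
  have h := hC (B.π y) (Set.mem_univ _)
  rwa [Real.norm_eq_abs, show B.ρ θ f (B.π y) = θ (f y) - θ y from congrFun hdesc y] at h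

lemma abs_displacement_prod_le {θ : Xh → ℝ} {C : ℝ} (w : List (Xh ≃ₜ Xh))
    (hw : ∀ s ∈ w, ∀ y, |θ (s y) - θ y| ≤ C) (y : Xh) :
    |θ (w.prod y) - θ y| ≤ C * w.length := by
  induction w with
  | nil => simp
  | cons s w ih =>
    have h : (s :: w).prod y = s (w.prod y) := by rw [List.prod_cons]; rfl
    have h1 := hw s List.mem_cons_self (w.prod y)
    have h2 := ih fun t ht => hw t (List.mem_cons_of_mem _ ht)
    have h3 := abs_sub_le (θ (s (w.prod y))) (θ (w.prod y)) (θ y)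
    rw [h, List.length_cons]
    push_cast
    linarith

/-- over a compact base with a continuous equivariant θ, a bundle
automorphism with non-zero local translation number is undistorted in the group of
bundle automorphisms. -/
theorem stmt14 (hA : IsIntOrReal A) (B : BundleSetting A Xh X)
    (hcov : IsCoveringMap B.π) [CompactSpace X]
    (θ : Xh → ℝ) (hc : Continuous θ) (hθ : B.Equivariant θ)
    (gh : Xh ≃ₜ Xh) (g : X ≃ₜ X) (hgh : B.IsAuto gh g) (x : X) (L : ℝ)
    (hrot : Tendsto (fun n : ℕ => B.ρ θ (⇑gh)^[n] x / n) atTop (𝓝 L)) (hL : L ≠ 0)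
    (Γ : Subgroup (Xh ≃ₜ Xh)) (hΓ : ∀ f ∈ Γ, ∃ f0 : X ≃ₜ X, B.IsAuto f f0)
    (hghΓ : gh ∈ Γ) (S : Finset (Xh ≃ₜ Xh)) (hSΓ : (S : Set (Xh ≃ₜ Xh)) ⊆ (Γ : Set (Xh ≃ₜ Xh)))
    (hSsymm : ∀ s ∈ S, s⁻¹ ∈ S) (hSgen : Subgroup.closure (S : Set (Xh ≃ₜ Xh)) = Γ) :
    ∃ τ : ℝ, 0 < τ ∧ Tendsto (fun n : ℕ => (wordNorm S (gh ^ n) : ℝ) / n) atTop (𝓝 τ) := by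
  subst hSgen
  have hpow : ∀ n : ℕ, gh ^ n ∈ Subgroup.closure (S : Set (Xh ≃ₜ Xh)) := fun n =>
    pow_mem hghΓ n
  have hsub : Subadditive fun n : ℕ => (wordNorm S (gh ^ n) : ℝ) := by
    intro m n
    dsimp only
    rw [pow_add]
    exact_mod_cast wordNorm_mul_le hSsymm (hpow m) (hpow n)
  have hlim := hsub.tendsto_lim
    ⟨0, by rintro _ ⟨n, rfl⟩; positivity⟩
  refine ⟨hsub.lim, ?_, hlim⟩
  obtain ⟨C, hC⟩ : ∃ C : ℝ, ∀ s ∈ S, ∀ y, |θ (s y) - θ y| ≤ C := by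
    have hb : ∀ s ∈ S, ∃ C : ℝ, ∀ y, |θ (s y) - θ y| ≤ C := fun s hs =>
      let ⟨_, hf⟩ := hΓ s (hSΓ hs)
      exists_displacement_bound B hcov hc hθ hf
    choose! c hc' using hb
    obtain ⟨M, hM⟩ := (S.image c).bddAbove
    exact ⟨M, fun s hs y => (hc' s hs y).trans (hM (by
      simpa using ⟨s, hs, rfl⟩))⟩
  have hle : ∀ n : ℕ, |B.ρ θ (⇑gh)^[n] x / n| ≤ C * ((wordNorm S (gh ^ n) : ℝ) / n) := by
    intro n
    obtain ⟨w, hlen, hwS, hprod⟩ := exists_word_length_eq_wordNorm hSsymm (hpow n)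
    have h := abs_displacement_prod_le w (fun s hs => hC s (hwS s hs))
      (Function.surjInv B.hπ_surj x)
    rw [hprod, hlen, homeomorph_coe_pow] at h
    rw [abs_div, Nat.abs_cast, ← mul_div_assoc]
    exact div_le_div_of_nonneg_right h n.cast_nonneg
  have hLC : |L| ≤ C * hsub.lim := le_of_tendsto_of_tendsto' hrot.abs (hlim.const_mul C) hle
  have hnonneg : 0 ≤ hsub.lim := ge_of_tendsto' hlim fun n => by positivity
  refine hnonneg.lt_of_ne fun h0 => ?_
  rw [← h0, mul_zero] at hLC
  exact absurd hLC (abs_pos.2 hL).not_ge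
end
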